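/- Fix real α, β > −1, j ∈ ℕ with j ≥ 1, M > 0, and a sequence M_n ≥ 0 with lim_{n→∞} M_n n^γ = M, where γ = 2(α+2j+1). If M > 2^{α+β+2j+1}·(α+j+1)·(α+2j+1)·Γ²(α+j+1)/j, then the largest real zero y_{n,1} of Q_n satisfies lim_{n→∞} y_{n,1} = 1. -/

import Mathlib

open Polynomial Filter

/-- The Jacobi polynomial `P_n^{(α,β)}` as a real polynomial. -/
noncomputable def jacobiP (α β : ℝ) (n : ℕ) : Polynomial ℝ :=
  ∑ k ∈ Finset.range (n + 1),
    Polynomial.C (Real.Gamma (n + α + 1) / (Real.Gamma ((n : ℝ) - k + 1) * Real.Gamma (α + k + 1)) *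
        (Real.Gamma (n + β + 1) / (Real.Gamma ((k : ℝ) + 1) * Real.Gamma ((n : ℝ) - k + β + 1)))) *
      (Polynomial.C (2⁻¹ : ℝ) * (Polynomial.X - 1)) ^ k *
      (Polynomial.C (2⁻¹ : ℝ) * (Polynomial.X + 1)) ^ (n - k)

/-- The squared Jacobi norm `‖P_n^{(α,β)}‖²`. -/
noncomputable def jacobiNormSq (α β : ℝ) (n : ℕ) : ℝ :=
  ∫ x in (-1 : ℝ)..1, (jacobiP α β n).eval x ^ 2 * (1 - x) ^ α * (1 + x) ^ β

/-- The kernel `K_n^{(j,k)}(x,y)`. -/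
noncomputable def kernK (α β : ℝ) (j k n : ℕ) (x y : ℝ) : ℝ :=
  ∑ i ∈ Finset.range (n + 1),
    (Polynomial.derivative^[j] (jacobiP α β i)).eval x *
      (Polynomial.derivative^[k] (jacobiP α β i)).eval y / jacobiNormSq α β i

/-- The kernel `K_n^{(j,0)}(1,·)` as a polynomial. -/
noncomputable def kernKPoly (α β : ℝ) (j n : ℕ) : Polynomial ℝ :=
  ∑ i ∈ Finset.range (n + 1),
    Polynomial.C ((Polynomial.derivative^[j] (jacobiP α β i)).eval 1 / jacobiNormSq α β i) *
      jacobiP α β i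

/-- The varying Sobolev inner product `(f,g)_{S,n}` with mass `m`. -/
noncomputable def sobInner (α β : ℝ) (j : ℕ) (m : ℝ) (f g : Polynomial ℝ) : ℝ :=
  (∫ x in (-1 : ℝ)..1, f.eval x * g.eval x * (1 - x) ^ α * (1 + x) ^ β) +
    m * (Polynomial.derivative^[j] f).eval 1 * (Polynomial.derivative^[j] g).eval 1

/-- The Jacobi–Sobolev orthogonal polynomial `Q_n`. -/
noncomputable def sobQ (α β : ℝ) (j : ℕ) (Ms : ℕ → ℝ) (n : ℕ) : Polynomial ℝ :=
  jacobiP α β n -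
    Polynomial.C (Ms n * (Polynomial.derivative^[j] (jacobiP α β n)).eval 1 /
        (1 + Ms n * kernK α β j j (n - 1) 1 1)) *
      kernKPoly α β j (n - 1)

lemma gamma_desc (x : ℝ) (k : ℕ) (h : 0 < x + 1 - k) :
    Real.Gamma (x + 1) = (∏ i ∈ Finset.range k, (x - i)) * Real.Gamma (x - k + 1) := by
  induction k with
  | zero => simp
  | succ k ih =>
    push_cast at h ⊢
    rw [ih (by linarith), Finset.prod_range_succ, show x - k + 1 = (x - k) + 1 by ring,
      Real.Gamma_add_one (by linarith), show x - (k + 1) + 1 = x - k by ring]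
    ring

lemma smeval_desc (r : ℝ) (k : ℕ) :
    (descPochhammer ℤ k).smeval r = ∏ i ∈ Finset.range k, (r - i) := by
  induction k with
  | zero => simp
  | succ k ih =>
    rw [descPochhammer_succ_right, mul_comm, smeval_mul, ih, Finset.prod_range_succ, smeval_sub, smeval_X,
      smeval_natCast]
    simp; ring

lemma vandermonde (r s : ℝ) (m : ℕ) :
    ∏ i ∈ Finset.range m, (r + s - i) = ∑ k ∈ Finset.range (m + 1), (m.choose k : ℝ) *
      ((∏ i ∈ Finset.range k, (r - i)) * ∏ i ∈ Finset.range (m - k), (s - i)) := by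
  have := Ring.descPochhammer_smeval_add (r := r) (s := s) m (Commute.all _ _)
  simp only [smeval_desc] at this
  rw [this, Finset.Nat.sum_antidiagonal_eq_sum_range_succ_mk]

/-- coefficients in powers of (x-1)/2 -/
noncomputable def dJ (α β : ℝ) (n k : ℕ) : ℝ :=
  Real.Gamma (n + α + 1) / n.factorial * n.descFactorial k *
    (∏ l ∈ Finset.range k, ((n : ℝ) + α + β + 1 + l)) / (k.factorial * Real.Gamma (α + k + 1))

noncomputable def aJ (α β : ℝ) (n k : ℕ) : ℝ :=
  Real.Gamma (n + α + 1) / (Real.Gamma ((n : ℝ) - k + 1) * Real.Gamma (α + k + 1)) *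
        (Real.Gamma (n + β + 1) / (Real.Gamma ((k : ℝ) + 1) * Real.Gamma ((n : ℝ) - k + β + 1)))

lemma aJ_sum (α β : ℝ) (hα : -1 < α) (hβ : -1 < β) (n m : ℕ) (hm : m ≤ n) :
    ∑ k ∈ Finset.range (m + 1), aJ α β n k * ((n - k).choose (m - k) : ℝ) = dJ α β n m := by
  have hprod : (∏ l ∈ Finset.range m, ((n : ℝ) + α + β + 1 + l)) =
      ∏ i ∈ Finset.range m, (((n : ℝ) + β) + (α + m) - i) := by
    rw [← Finset.prod_range_reflect]
    apply Finset.prod_congr rfl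
    intro i hi
    have hi := Finset.mem_range.1 hi
    rw [Nat.cast_sub (by omega), Nat.cast_sub (by omega)]; push_cast; ring
  unfold dJ
  rw [hprod, vandermonde, Finset.mul_sum, Finset.sum_div]
  apply Finset.sum_congr rfl
  intro k hk
  have hk : k ≤ m := by have := Finset.mem_range.1 hk; omega
  have hkn : k ≤ n := hk.trans hm
  have c1 : (k : ℝ) ≤ m := by exact_mod_cast hk
  have c2 : (m : ℝ) ≤ n := by exact_mod_cast hm
  have c0 : (0 : ℝ) ≤ k := by positivity
  have g1 := gamma_desc (n + β) k (by linarith)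
  have g2 := gamma_desc (α + m) (m - k) (by rw [Nat.cast_sub hk]; linarith)
  rw [Nat.cast_sub hk, show α + m - (m - k : ℝ) + 1 = α + k + 1 by ring] at g2
  have g3 : Real.Gamma ((n : ℝ) - k + 1) = (n - k).factorial := by
    rw [← Nat.cast_sub hkn, Real.Gamma_nat_eq_factorial]
  have g4 : Real.Gamma ((k : ℝ) + 1) = k.factorial := Real.Gamma_nat_eq_factorial k
  have p1 : 0 < Real.Gamma (α + k + 1) := Real.Gamma_pos_of_pos (by linarith)
  have p2 : 0 < Real.Gamma (α + m + 1) := Real.Gamma_pos_of_pos (by linarith)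
  have p3 : 0 < Real.Gamma ((n : ℝ) - k + β + 1) := Real.Gamma_pos_of_pos (by linarith)
  have e1 : Real.Gamma ((n : ℝ) + β - k + 1) = Real.Gamma ((n : ℝ) - k + β + 1) := by congr 1; ring
  have h1 : (n.descFactorial m : ℝ) * (n - m).factorial = n.factorial := by
    rw [mul_comm]; exact_mod_cast Nat.factorial_mul_descFactorial hm
  have h2 : ((n - k).choose (m - k) : ℝ) * (m - k).factorial * (n - m).factorial = (n - k).factorial := by
    have := Nat.choose_mul_factorial_mul_factorial (n := n - k) (k := m - k) (by omega)
    rw [show n - k - (m - k) = n - m by omega] at this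
    exact_mod_cast this
  have h3 : (m.choose k : ℝ) * k.factorial * (m - k).factorial = m.factorial := by
    exact_mod_cast Nat.choose_mul_factorial_mul_factorial hk
  unfold aJ
  rw [g3, g4, g1, e1]
  set A := ∏ i ∈ Finset.range k, ((n : ℝ) + β - i)
  set B := ∏ i ∈ Finset.range (m - k), (α + (m : ℝ) - i)
  rw [g2, ← h1, ← h2, ← h3]
  have f1 : ((n - m).factorial : ℝ) ≠ 0 := by positivity
  have f2 : ((m - k).factorial : ℝ) ≠ 0 := by positivity
  have f3 : (k.factorial : ℝ) ≠ 0 := by positivity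
  have f4 : ((m.choose k : ℕ) : ℝ) ≠ 0 := by
    have := Nat.choose_pos hk; positivity
  have f5 : (((n - k).choose (m - k) : ℕ) : ℝ) ≠ 0 := by
    have := Nat.choose_pos (n := n - k) (k := m - k) (by omega); positivity
  have f6 : (n.descFactorial m : ℝ) ≠ 0 := by
    have : n.descFactorial m ≠ 0 := by rw [Ne, Nat.descFactorial_eq_zero_iff_lt]; omega
    exact_mod_cast this
  have f7 : B ≠ 0 := by
    intro h; rw [h] at g2; linarith
  field_simp

lemma jacobiP_eval (α β : ℝ) (hα : -1 < α) (hβ : -1 < β) (n : ℕ) (x : ℝ) :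
    (jacobiP α β n).eval x = ∑ k ∈ Finset.range (n + 1), dJ α β n k * ((x - 1) / 2) ^ k := by
  unfold jacobiP
  rw [eval_finsetSum]
  set s := (x - 1) / 2 with hs
  have hterm : ∀ k ∈ Finset.range (n + 1), eval x (Polynomial.C (Real.Gamma (n + α + 1) / (Real.Gamma ((n : ℝ) - k + 1) * Real.Gamma (α + k + 1)) *
        (Real.Gamma (n + β + 1) / (Real.Gamma ((k : ℝ) + 1) * Real.Gamma ((n : ℝ) - k + β + 1)))) *
      (Polynomial.C (2⁻¹ : ℝ) * (Polynomial.X - 1)) ^ k *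
      (Polynomial.C (2⁻¹ : ℝ) * (Polynomial.X + 1)) ^ (n - k))
      = ∑ m ∈ Finset.Ico k (n + 1), aJ α β n k * ((n - k).choose (m - k) : ℝ) * s ^ m := by
    intro k hk
    have hk : k ≤ n := by have := Finset.mem_range.1 hk; omega
    rw [Finset.sum_Ico_eq_sum_range]
    simp only [eval_mul, eval_pow, eval_C, eval_sub, eval_X, eval_one, eval_add]
    rw [show (2⁻¹ : ℝ) * (x - 1) = s by rw [hs]; ring, show (2⁻¹ : ℝ) * (x + 1) = s + 1 by rw [hs]; ring,
      add_pow, Finset.mul_sum, show n + 1 - k = n - k + 1 by omega]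
    apply Finset.sum_congr rfl
    intro i _
    simp only [aJ, one_pow, Nat.add_sub_cancel_left]
    rw [pow_add]; ring
  rw [Finset.sum_congr rfl hterm, Finset.sum_comm' (t' := Finset.range (n + 1)) (s' := fun m => Finset.range (m + 1))]
  · apply Finset.sum_congr rfl
    intro m hm
    rw [← aJ_sum α β hα hβ n m (by have := Finset.mem_range.1 hm; omega), Finset.sum_mul]
  · intro a b
    simp only [Finset.mem_range, Finset.mem_Ico]; omega

lemma dJ_zero (α β : ℝ) (n k : ℕ) (h : n < k) : dJ α β n k = 0 := by
  simp [dJ, Nat.descFactorial_of_lt h]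

lemma jacobiP_eval' (α β : ℝ) (hα : -1 < α) (hβ : -1 < β) (n N : ℕ) (hN : n ≤ N) (x : ℝ) :
    (jacobiP α β n).eval x = ∑ k ∈ Finset.range (N + 1), dJ α β n k * ((x - 1) / 2) ^ k := by
  rw [jacobiP_eval α β hα hβ]
  apply Finset.sum_subset
  · intro a; simp only [Finset.mem_range]; omega
  · intro k _ hk
    rw [dJ_zero _ _ _ _ (by simp only [Finset.mem_range] at hk; omega), zero_mul]

lemma jacobiP_poly (α β : ℝ) (hα : -1 < α) (hβ : -1 < β) (n : ℕ) :
    jacobiP α β n = ∑ k ∈ Finset.range (n + 1), C (dJ α β n k / 2 ^ k) * (X - C 1) ^ k := by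
  apply Polynomial.funext
  intro x
  rw [jacobiP_eval α β hα hβ, eval_finsetSum]
  apply Finset.sum_congr rfl
  intro k _
  simp [div_pow]; ring

lemma jacobiP_deriv (α β : ℝ) (hα : -1 < α) (hβ : -1 < β) (n j : ℕ) :
    (derivative^[j] (jacobiP α β n)).eval 1 = j.factorial * dJ α β n j / 2 ^ j := by
  rw [← factorial_smul_hasseDeriv, LinearMap.smul_apply, eval_smul, ← taylor_coeff, jacobiP_poly α β hα hβ]
  simp only [map_sum, taylor_mul, taylor_pow, taylor_C, map_sub, taylor_X, add_sub_cancel_right, finsetSum_coeff,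
    coeff_C_mul, coeff_X_pow]
  rw [nsmul_eq_mul]
  by_cases h : j ≤ n
  · rw [Finset.sum_eq_single j]
    · simp; ring
    · intro b _ hb; simp [hb.symm]
    · intro hh; simp only [Finset.mem_range] at hh; omega
  · rw [Finset.sum_eq_zero, dJ_zero _ _ _ _ (by omega)]
    · simp
    · intro b hb
      simp only [Finset.mem_range] at hb
      simp [show j ≠ b by omega]


lemma beta_real (a b : ℝ) (ha : 0 < a) (hb : 0 < b) :
    IntervalIntegrable (fun u : ℝ => u ^ (a - 1) * (1 - u) ^ (b - 1)) MeasureTheory.volume 0 1 ∧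
    ∫ u in (0:ℝ)..1, u ^ (a - 1) * (1 - u) ^ (b - 1) =
      Real.Gamma a * Real.Gamma b / Real.Gamma (a + b) := by
  have hc := Complex.betaIntegral_convergent (u := (a : ℂ)) (v := (b : ℂ)) (by simpa) (by simpa)
  have heq : Set.EqOn (fun x : ℝ => (x : ℂ) ^ ((a : ℂ) - 1) * (1 - (x : ℂ)) ^ ((b : ℂ) - 1))
      (fun u : ℝ => ((u ^ (a - 1) * (1 - u) ^ (b - 1) : ℝ) : ℂ)) (Set.uIcc 0 1) := by
    intro x hx
    rw [Set.uIcc_of_le zero_le_one] at hx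
    simp only
    rw [Complex.ofReal_mul, Complex.ofReal_cpow hx.1, Complex.ofReal_cpow (by linarith [hx.2])]
    push_cast; rfl
  have hintg : IntervalIntegrable (fun u : ℝ => ((u ^ (a - 1) * (1 - u) ^ (b - 1) : ℝ) : ℂ)) MeasureTheory.volume 0 1 := by
    refine hc.congr ?_
    intro x hx
    exact heq (Set.uIoc_subset_uIcc hx)
  constructor
  · have := hintg.norm
    refine (this.congr ?_)
    intro x hx
    rw [Set.uIoc_of_le zero_le_one] at hx
    simp only [Complex.norm_real]
    rw [Real.norm_of_nonneg]
    have := hx.2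
    have := hx.1
    apply mul_nonneg <;> apply Real.rpow_nonneg <;> linarith
  · have h1 : Complex.betaIntegral a b = ((∫ u in (0:ℝ)..1, u ^ (a - 1) * (1 - u) ^ (b - 1) : ℝ) : ℂ) := by
      unfold Complex.betaIntegral
      rw [intervalIntegral.integral_congr heq, intervalIntegral.integral_ofReal]
    have h2 := ProbabilityTheory.beta_eq_betaIntegralReal a b ha hb
    rw [h1, Complex.ofReal_re] at h2
    rw [← h2]; rfl

lemma gamma_asc (x : ℝ) (hx : 0 < x) (l : ℕ) :
    Real.Gamma (x + l) = Real.Gamma x * (ascPochhammer ℝ l).eval x := by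
  induction l with
  | zero => simp
  | succ l ih =>
    have : 0 < x + l := by positivity
    push_cast
    rw [← add_assoc, Real.Gamma_add_one this.ne', ih, ascPochhammer_succ_eval]; ring

lemma diff_asc (n l : ℕ) (hl : l ≤ n) (y : ℝ) :
    ∑ k ∈ Finset.range (n + 1), (-1 : ℝ) ^ k * (n.choose k) * (ascPochhammer ℝ l).eval (y + k) =
      if l = n then (-1 : ℝ) ^ n * n.factorial else 0 := by
  have h := fwdDiff_iter_eq_sum_shift (1 : ℝ) (ascPochhammer ℝ l).eval n y
  have h2 : ∑ k ∈ Finset.range (n + 1), (-1 : ℝ) ^ k * (n.choose k) * (ascPochhammer ℝ l).eval (y + k) =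
      (-1) ^ n * (fwdDiff (1 : ℝ))^[n] (ascPochhammer ℝ l).eval y := by
    rw [h, Finset.mul_sum]
    apply Finset.sum_congr rfl
    intro k hk
    have hk : k ≤ n := by have := Finset.mem_range.1 hk; omega
    have : (-1 : ℝ) ^ n = (-1) ^ (n - k) * (-1) ^ k := by rw [← pow_add]; congr 1; omega
    have h1 : (-1 : ℝ) ^ (n - k) * (-1) ^ (n - k) = 1 := by rw [← mul_pow]; simp
    simp only [zsmul_eq_mul, nsmul_eq_mul, mul_one, Int.cast_mul, Int.cast_pow, Int.cast_neg, Int.cast_one, Int.cast_natCast]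
    rw [this]
    linear_combination (-(-1 : ℝ) ^ k * (n.choose k) * (ascPochhammer ℝ l).eval (y + k)) * h1
  rw [h2]
  split_ifs with hln
  · subst hln
    have h3 := Polynomial.fwdDiff_iter_degree_eq_factorial (ascPochhammer ℝ l)
    rw [ascPochhammer_natDegree, (monic_ascPochhammer ℝ l).leadingCoeff] at h3
    rw [h3]; simp
  · rw [Polynomial.fwdDiff_iter_eq_zero_of_degree_lt]
    · simp
    · rw [ascPochhammer_natDegree]; omega

lemma jacobiP_eval_a (α β : ℝ) (n : ℕ) (u : ℝ) :
    (jacobiP α β n).eval (1 - 2 * u) = ∑ k ∈ Finset.range (n + 1), aJ α β n k * (-u) ^ k * (1 - u) ^ (n - k) := by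
  unfold jacobiP
  rw [eval_finsetSum]
  apply Finset.sum_congr rfl
  intro k _
  simp only [eval_mul, eval_pow, eval_C, eval_sub, eval_X, eval_one, eval_add, aJ]
  rw [show (2⁻¹ : ℝ) * (1 - 2 * u - 1) = -u by ring, show (2⁻¹ : ℝ) * (1 - 2 * u + 1) = 1 - u by ring]

lemma jacobi_inner_sum (α β : ℝ) (hα : -1 < α) (hβ : -1 < β) (n l : ℕ) (hl : l ≤ n) :
    ∑ k ∈ Finset.range (n + 1), aJ α β n k * (-1) ^ k *
      (Real.Gamma (α + k + l + 1) * Real.Gamma ((n : ℝ) - k + β + 1) / Real.Gamma (α + β + n + l + 2)) =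
    Real.Gamma (n + α + 1) * Real.Gamma (n + β + 1) / (n.factorial * Real.Gamma (α + β + n + l + 2)) *
      (if l = n then (-1 : ℝ) ^ n * n.factorial else 0) := by
  rw [← diff_asc n l hl (α + 1), Finset.mul_sum]
  apply Finset.sum_congr rfl
  intro k hk
  have hk : k ≤ n := by have := Finset.mem_range.1 hk; omega
  have c2 : (k : ℝ) ≤ n := by exact_mod_cast hk
  have c0 : (0 : ℝ) ≤ k := by positivity
  have c1 : (0 : ℝ) ≤ l := by positivity
  have g := gamma_asc (α + k + 1) (by linarith) l
  rw [show α + k + l + 1 = α + k + 1 + l by ring, g, show α + 1 + k = α + k + 1 by ring]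
  have g3 : Real.Gamma ((n : ℝ) - k + 1) = (n - k).factorial := by
    rw [← Nat.cast_sub hk, Real.Gamma_nat_eq_factorial]
  have g4 : Real.Gamma ((k : ℝ) + 1) = k.factorial := Real.Gamma_nat_eq_factorial k
  have p1 : 0 < Real.Gamma (α + k + 1) := Real.Gamma_pos_of_pos (by linarith)
  have p2 : 0 < Real.Gamma (α + β + n + l + 2) := Real.Gamma_pos_of_pos (by linarith)
  have p3 : 0 < Real.Gamma ((n : ℝ) - k + β + 1) := Real.Gamma_pos_of_pos (by linarith)
  have h3 : (n.choose k : ℝ) * k.factorial * (n - k).factorial = n.factorial := by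
    exact_mod_cast Nat.choose_mul_factorial_mul_factorial hk
  unfold aJ
  rw [g3, g4, ← h3]
  have f2 : ((n - k).factorial : ℝ) ≠ 0 := by positivity
  have f3 : (k.factorial : ℝ) ≠ 0 := by positivity
  have f4 : ((n.choose k : ℕ) : ℝ) ≠ 0 := by
    have := Nat.choose_pos hk; positivity
  field_simp

lemma norm_subst (α β : ℝ) (n : ℕ) :
    jacobiNormSq α β n = 2 ^ (α + β + 1) *
      ∫ u in (0:ℝ)..1, (jacobiP α β n).eval (1 - 2 * u) ^ 2 * u ^ α * (1 - u) ^ β := by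
  unfold jacobiNormSq
  have h := intervalIntegral.integral_comp_sub_mul (a := 0) (b := 1)
    (fun x : ℝ => (jacobiP α β n).eval x ^ 2 * (1 - x) ^ α * (1 + x) ^ β) (c := 2) (by norm_num) 1
  norm_num at h
  have h' : ∫ x in (-1:ℝ)..1, (jacobiP α β n).eval x ^ 2 * (1 - x) ^ α * (1 + x) ^ β =
      2 * ∫ u in (0:ℝ)..1, eval (1 - 2 * u) (jacobiP α β n) ^ 2 * (2 * u) ^ α * (1 + (1 - 2 * u)) ^ β := by
    rw [h]; ring
  rw [h', ← intervalIntegral.integral_const_mul, ← intervalIntegral.integral_const_mul]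
  apply intervalIntegral.integral_congr
  intro u hu
  rw [Set.uIcc_of_le zero_le_one] at hu
  simp only
  rw [show 1 + (1 - 2 * u) = 2 * (1 - u) by ring, Real.mul_rpow (by norm_num) hu.1,
    Real.mul_rpow (by norm_num) (by linarith [hu.2]), Real.rpow_add (by norm_num), Real.rpow_add (by norm_num),
    Real.rpow_one]
  ring

lemma norm_formula (α β : ℝ) (hα : -1 < α) (hβ : -1 < β) (n : ℕ) :
    jacobiNormSq α β n = 2 ^ (α + β + 1) * (dJ α β n n * (Real.Gamma (n + α + 1) * Real.Gamma (n + β + 1) /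
      Real.Gamma (2 * n + α + β + 2))) := by
  rw [norm_subst]
  congr 1
  have hpt : ∀ u ∈ Set.Ioo (0:ℝ) 1, (jacobiP α β n).eval (1 - 2 * u) ^ 2 * u ^ α * (1 - u) ^ β =
      ∑ l ∈ Finset.range (n + 1), ∑ k ∈ Finset.range (n + 1),
        (dJ α β n l * (-1) ^ l * (aJ α β n k * (-1) ^ k)) *
          (u ^ ((α + k + l + 1) - 1) * (1 - u) ^ (((n : ℝ) - k + β + 1) - 1)) := by
    intro u hu
    have hu1 : 0 < 1 - u := by linarith [hu.2]
    rw [sq]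
    nth_rw 1 [jacobiP_eval α β hα hβ]
    rw [jacobiP_eval_a, Finset.sum_mul_sum, Finset.sum_mul, Finset.sum_mul]
    apply Finset.sum_congr rfl
    intro l _
    rw [Finset.sum_mul, Finset.sum_mul]
    apply Finset.sum_congr rfl
    intro k hk
    have hk : k ≤ n := by have := Finset.mem_range.1 hk; omega
    rw [show α + k + l + 1 - 1 = α + k + l by ring, Real.rpow_add hu.1, Real.rpow_add hu.1,
      show (n : ℝ) - k + β + 1 - 1 = ((n - k : ℕ) : ℝ) + β by rw [Nat.cast_sub hk]; ring, Real.rpow_add hu1,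
      Real.rpow_natCast, Real.rpow_natCast, Real.rpow_natCast, show (1 - 2 * u - 1) / 2 = -u by ring,
      neg_pow u, neg_pow u]
    ring
  have hI : ∫ u in (0:ℝ)..1, (jacobiP α β n).eval (1 - 2 * u) ^ 2 * u ^ α * (1 - u) ^ β =
      ∫ u in (0:ℝ)..1, ∑ l ∈ Finset.range (n + 1), ∑ k ∈ Finset.range (n + 1),
        (dJ α β n l * (-1) ^ l * (aJ α β n k * (-1) ^ k)) *
          (u ^ ((α + k + l + 1) - 1) * (1 - u) ^ (((n : ℝ) - k + β + 1) - 1)) := by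
    rw [intervalIntegral.integral_of_le zero_le_one, intervalIntegral.integral_of_le zero_le_one,
      MeasureTheory.integral_Ioc_eq_integral_Ioo, MeasureTheory.integral_Ioc_eq_integral_Ioo]
    exact MeasureTheory.setIntegral_congr_fun measurableSet_Ioo hpt
  have hpos1 : ∀ l k : ℕ, 0 < α + k + l + 1 := by
    intro l k
    have c0 : (0 : ℝ) ≤ k := by positivity
    have c1 : (0 : ℝ) ≤ l := by positivity
    linarith
  have hpos2 : ∀ k ∈ Finset.range (n + 1), 0 < (n : ℝ) - k + β + 1 := by
    intro k hk
    have hk : k ≤ n := by have := Finset.mem_range.1 hk; omega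
    have c2 : (k : ℝ) ≤ n := by exact_mod_cast hk
    linarith
  rw [hI, intervalIntegral.integral_finsetSum]
  · have : ∀ l ∈ Finset.range (n + 1), (∫ u in (0:ℝ)..1, ∑ k ∈ Finset.range (n + 1),
        (dJ α β n l * (-1) ^ l * (aJ α β n k * (-1) ^ k)) *
          (u ^ ((α + k + l + 1) - 1) * (1 - u) ^ (((n : ℝ) - k + β + 1) - 1))) =
        dJ α β n l * (-1) ^ l * (Real.Gamma (n + α + 1) * Real.Gamma (n + β + 1) / (n.factorial * Real.Gamma (α + β + n + l + 2)) *
      (if l = n then (-1 : ℝ) ^ n * n.factorial else 0)) := by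
      intro l hl
      rw [intervalIntegral.integral_finsetSum]
      · rw [← jacobi_inner_sum α β hα hβ n l (by have := Finset.mem_range.1 hl; omega), Finset.mul_sum]
        apply Finset.sum_congr rfl
        intro k hk
        rw [intervalIntegral.integral_const_mul, (beta_real _ _ (hpos1 l k) (hpos2 k hk)).2,
          show α + k + l + 1 + ((n : ℝ) - k + β + 1) = α + β + n + l + 2 by ring]
        ring
      · intro k hk
        exact (beta_real _ _ (hpos1 l k) (hpos2 k hk)).1.const_mul _
    rw [Finset.sum_congr rfl this, Finset.sum_eq_single n]
    · have f3 : (n.factorial : ℝ) ≠ 0 := by positivity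
      have h1 : (-1 : ℝ) ^ n * (-1) ^ n = 1 := by rw [← mul_pow]; simp
      have hc : (0:ℝ) ≤ n := by positivity
      have p2 : Real.Gamma (α + β + n + n + 2) ≠ 0 := (Real.Gamma_pos_of_pos (by linarith)).ne'
      rw [if_pos rfl, show (2 : ℝ) * n + α + β + 2 = α + β + n + n + 2 by ring]
      field_simp
      linear_combination (dJ α β n n * Real.Gamma (n + α + 1) * Real.Gamma (n + β + 1)) * h1
    · intro b _ hb; simp [hb]
    · simp
  · intro l hl
    have hs := IntervalIntegrable.sum (μ := MeasureTheory.volume) (a := (0:ℝ)) (b := 1) (Finset.range (n + 1))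
      (f := fun k u => (dJ α β n l * (-1) ^ l * (aJ α β n k * (-1) ^ k)) *
          (u ^ ((α + k + l + 1) - 1) * (1 - u) ^ (((n : ℝ) - k + β + 1) - 1)))
      (fun k hk => (beta_real _ _ (hpos1 l k) (hpos2 k hk)).1.const_mul _)
    simpa only [Finset.sum_fn] using hs


lemma tendsto_add_div (c : ℝ) : Tendsto (fun n : ℕ => ((n : ℝ) + c) / n) atTop (nhds 1) := by
  have h : Tendsto (fun n : ℕ => 1 + c / (n : ℝ)) atTop (nhds (1 + 0)) :=
    tendsto_const_nhds.add (tendsto_const_div_atTop_nhds_zero_nat c)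
  rw [add_zero] at h
  refine h.congr' ?_
  filter_upwards [eventually_gt_atTop 0] with n hn
  have : (n : ℝ) ≠ 0 := by positivity
  field_simp

lemma gamma_prod (x : ℝ) (hx : 0 < x) (l : ℕ) :
    Real.Gamma (x + l) = (∏ i ∈ Finset.range l, (x + i)) * Real.Gamma x := by
  induction l with
  | zero => simp
  | succ l ih =>
    have : 0 < x + l := by positivity
    push_cast
    rw [← add_assoc, Real.Gamma_add_one this.ne', ih, Finset.prod_range_succ]; ring

lemma gamma_asymp_pos (s : ℝ) (hs : 0 < s) :
    Tendsto (fun n : ℕ => Real.Gamma (n + s + 1) / (n.factorial * (n : ℝ) ^ s)) atTop (nhds 1) := by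
  have h := Real.GammaSeq_tendsto_Gamma s
  have hg := (Real.Gamma_pos_of_pos hs).ne'
  have h2 := (tendsto_const_nhds (x := Real.Gamma s)).div h hg
  rw [div_self hg] at h2
  refine h2.congr' ?_
  filter_upwards [eventually_gt_atTop 0] with n hn
  have hn' : (0 : ℝ) < n := by positivity
  have g := gamma_prod s hs (n + 1)
  push_cast at g
  rw [show (n : ℝ) + s + 1 = s + (n + 1) by ring, g]
  have hp : ∏ i ∈ Finset.range (n + 1), (s + (i : ℝ)) ≠ 0 := by
    apply Finset.prod_ne_zero_iff.2; intro i _; positivity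
  have hf : (n.factorial : ℝ) ≠ 0 := by positivity
  have hr : (n : ℝ) ^ s ≠ 0 := by positivity
  simp only [Pi.div_apply, Real.GammaSeq]
  field_simp

lemma gamma_asymp (m : ℕ) : ∀ s : ℝ, -(m : ℝ) < s →
    Tendsto (fun n : ℕ => Real.Gamma (n + s + 1) / (n.factorial * (n : ℝ) ^ s)) atTop (nhds 1) := by
  induction m with
  | zero => intro s hs; exact gamma_asymp_pos s (by simpa using hs)
  | succ m ih =>
    intro s hs
    push_cast at hs
    have h := (ih (s + 1) (by linarith)).div (tendsto_add_div (s + 1)) one_ne_zero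
    rw [div_one] at h
    refine h.congr' ?_
    filter_upwards [eventually_gt_atTop (m + 1)] with n hn
    have hn' : (m : ℝ) + 1 < n := by exact_mod_cast hn
    have hn0 : (0 : ℝ) < n := by have : (0:ℝ) ≤ m := by positivity
                                 linarith
    have hs1 : 0 < (n : ℝ) + s + 1 := by linarith
    have hs2 : 0 < (n : ℝ) + (s + 1) := by linarith
    simp only [Pi.div_apply]
    rw [show (n : ℝ) + (s + 1) + 1 = (n + s + 1) + 1 by ring, Real.Gamma_add_one hs1.ne', Real.rpow_add_one hn0.ne',
      show (n : ℝ) + (s + 1) = n + s + 1 by ring]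
    have hf : (n.factorial : ℝ) ≠ 0 := by positivity
    have hr : (n : ℝ) ^ s ≠ 0 := by positivity
    field_simp

lemma prod_asymp (c : ℝ) (k : ℕ) (e : ℝ) :
    Tendsto (fun n : ℕ => (∏ l ∈ Finset.range k, ((n : ℝ) + c + e * l)) / (n : ℝ) ^ k) atTop (nhds 1) := by
  have : Tendsto (fun n : ℕ => ∏ l ∈ Finset.range k, (((n : ℝ) + (c + e * l)) / n)) atTop (nhds (∏ l ∈ Finset.range k, 1)) :=
    tendsto_finsetProd _ (fun l _ => tendsto_add_div _)
  simp only [Finset.prod_const_one, Finset.prod_div_distrib, Finset.prod_const, Finset.card_range] at this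
  simpa only [add_assoc] using this

lemma desc_asymp (k : ℕ) :
    Tendsto (fun n : ℕ => (n.descFactorial k : ℝ) / (n : ℝ) ^ k) atTop (nhds 1) := by
  refine (prod_asymp 0 k (-1)).congr' ?_
  filter_upwards [eventually_ge_atTop k] with n hn
  congr 1
  rw [Nat.descFactorial_eq_prod_range, Nat.cast_prod]
  apply Finset.prod_congr rfl
  intro l hl
  have := Finset.mem_range.1 hl
  rw [Nat.cast_sub (by omega)]; ring

lemma dJ_asymp (α β : ℝ) (hα : -1 < α) (k : ℕ) :
    Tendsto (fun n : ℕ => dJ α β n k / (n : ℝ) ^ (α + 2 * k)) atTop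
      (nhds (1 / (k.factorial * Real.Gamma (α + k + 1)))) := by
  have h := (((gamma_asymp 1 α (by simpa using hα)).mul (desc_asymp k)).mul (prod_asymp (α + β + 1) k 1)).div_const
    (k.factorial * Real.Gamma (α + k + 1))
  simp only [mul_one] at h
  refine h.congr' ?_
  filter_upwards [eventually_gt_atTop 0] with n hn
  have hn0 : (0 : ℝ) < n := by positivity
  unfold dJ
  have e1 : (n : ℝ) ^ (α + 2 * k) = (n : ℝ) ^ α * (n : ℝ) ^ k * (n : ℝ) ^ k := by
    rw [show α + 2 * (k : ℝ) = α + k + k by ring, Real.rpow_add hn0, Real.rpow_add hn0, Real.rpow_natCast]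
  rw [e1]
  have e2 : ∏ l ∈ Finset.range k, ((n : ℝ) + (α + β + 1) + 1 * l) = ∏ l ∈ Finset.range k, ((n : ℝ) + α + β + 1 + l) := by
    apply Finset.prod_congr rfl; intro l _; ring
  rw [e2]
  have hf : (n.factorial : ℝ) ≠ 0 := by positivity
  have hr : (n : ℝ) ^ α ≠ 0 := by positivity
  by_cases hG : Real.Gamma (α + k + 1) = 0
  · simp [hG]
  field_simp

lemma dJ_pos (α β : ℝ) (hα : -1 < α) (hβ : -1 < β) (n k : ℕ) (h : k ≤ n) : 0 < dJ α β n k := by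
  have c0 : (0:ℝ) ≤ n := by positivity
  have c1 : (0:ℝ) ≤ k := by positivity
  have p1 : 0 < Real.Gamma (n + α + 1) := Real.Gamma_pos_of_pos (by linarith)
  have p2 : 0 < Real.Gamma (α + k + 1) := Real.Gamma_pos_of_pos (by linarith)
  have p3 : 0 < (n.descFactorial k : ℝ) := by
    have : 0 < n.descFactorial k := by
      rw [Nat.pos_iff_ne_zero, Ne, Nat.descFactorial_eq_zero_iff_lt]; omega
    exact_mod_cast this
  have p4 : 0 < ∏ l ∈ Finset.range k, ((n : ℝ) + α + β + 1 + l) := by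
    apply Finset.prod_pos
    intro l hl
    have hl := Finset.mem_range.1 hl
    have : (1 : ℝ) ≤ n := by exact_mod_cast (show 1 ≤ n by omega)
    have : (0:ℝ) ≤ l := by positivity
    linarith
  unfold dJ
  positivity

lemma dJ_nonneg (α β : ℝ) (hα : -1 < α) (hβ : -1 < β) (n k : ℕ) : 0 ≤ dJ α β n k := by
  by_cases h : k ≤ n
  · exact (dJ_pos α β hα hβ n k h).le
  · rw [dJ_zero _ _ _ _ (by omega)]

lemma norm_pos' (α β : ℝ) (hα : -1 < α) (hβ : -1 < β) (n : ℕ) : 0 < jacobiNormSq α β n := by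
  rw [norm_formula α β hα hβ]
  have c0 : (0:ℝ) ≤ n := by positivity
  have p0 := dJ_pos α β hα hβ n n le_rfl
  have p1 : 0 < Real.Gamma (n + α + 1) := Real.Gamma_pos_of_pos (by linarith)
  have p2 : 0 < Real.Gamma (n + β + 1) := Real.Gamma_pos_of_pos (by linarith)
  have p3 : 0 < Real.Gamma (2 * n + α + β + 2) := Real.Gamma_pos_of_pos (by linarith)
  positivity

lemma norm_asymp (α β : ℝ) (hα : -1 < α) (hβ : -1 < β) :
    Tendsto (fun n : ℕ => jacobiNormSq α β n * n) atTop (nhds (2 ^ (α + β))) := by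
  have h1 := gamma_asymp 1 α (by simpa using hα)
  have h2 := gamma_asymp 1 β (by simpa using hβ)
  have h3 := gamma_asymp 2 (α + β) (by push_cast; linarith)
  have h4 := tendsto_add_div ((α + β + 1) / 2)
  have h := (((h1.mul h2).div h3 one_ne_zero).div h4 one_ne_zero).const_mul ((2:ℝ) ^ (α + β))
  simp only [mul_one, div_one] at h
  refine h.congr' ?_
  filter_upwards [eventually_gt_atTop 0] with n hn
  have hn0 : (0 : ℝ) < n := by positivity
  have hn1 : (1 : ℝ) ≤ n := by exact_mod_cast hn
  rw [norm_formula α β hα hβ]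
  have g := gamma_prod ((n : ℝ) + α + β + 1) (by linarith) n
  have hX : 0 < (n : ℝ) + α + β + 1 + n := by linarith
  rw [show (2 : ℝ) * n + α + β + 2 = ((n : ℝ) + α + β + 1 + n) + 1 by ring, Real.Gamma_add_one hX.ne', g]
  unfold dJ
  rw [Nat.descFactorial_self]
  have p1 : Real.Gamma (n + α + 1) ≠ 0 := (Real.Gamma_pos_of_pos (by linarith)).ne'
  have p2 : Real.Gamma (n + α + β + 1) ≠ 0 := (Real.Gamma_pos_of_pos (by linarith)).ne'
  have hp : ∏ l ∈ Finset.range n, ((n : ℝ) + α + β + 1 + l) ≠ 0 := by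
    apply Finset.prod_ne_zero_iff.2; intro i _
    have : (0:ℝ) ≤ i := by positivity
    linarith
  simp only [Pi.div_apply]
  rw [show (n : ℝ) + (α + β) + 1 = n + α + β + 1 by ring, show α + (n : ℝ) + 1 = n + α + 1 by ring,
    Real.rpow_add hn0, Real.rpow_add_one (by norm_num : (2:ℝ) ≠ 0)]
  have hf : (n.factorial : ℝ) ≠ 0 := by positivity
  have hr : (n : ℝ) ^ α ≠ 0 := by positivity
  have hr2 : (n : ℝ) ^ β ≠ 0 := by positivity
  have hY : (n : ℝ) + (α + β + 1) / 2 = ((n : ℝ) + α + β + 1 + n) / 2 := by ring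
  rw [hY]
  have := hX.ne'
  field_simp

lemma g_asymp (q : ℝ) :
    Tendsto (fun n : ℕ => (((n : ℝ) + 1) ^ q - (n : ℝ) ^ q) / (n : ℝ) ^ (q - 1)) atTop (nhds q) := by
  have hd : HasDerivAt (fun x : ℝ => x ^ q) q 1 := by
    have := Real.hasDerivAt_rpow_const (x := 1) (p := q) (Or.inl one_ne_zero)
    simpa using this
  have ht := hasDerivAt_iff_tendsto_slope_zero.1 hd
  have hi : Tendsto (fun n : ℕ => (1 : ℝ) / n) atTop (nhdsWithin 0 {0}ᶜ) := by
    apply tendsto_nhdsWithin_iff.2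
    refine ⟨tendsto_const_div_atTop_nhds_zero_nat 1, ?_⟩
    filter_upwards [eventually_gt_atTop 0] with n hn
    have : (n : ℝ) ≠ 0 := by positivity
    simp [hn.ne']
  refine (ht.comp hi).congr' ?_
  filter_upwards [eventually_gt_atTop 0] with n hn
  have hn0 : (0 : ℝ) < n := by positivity
  simp only [Function.comp, smul_eq_mul, Real.one_rpow]
  rw [show (n : ℝ) + 1 = n * (1 + 1 / n) by field_simp, Real.mul_rpow hn0.le (by positivity), Real.rpow_sub_one hn0.ne']
  have hr : (n : ℝ) ^ q ≠ 0 := by positivity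
  field_simp

lemma sum_asymp (a : ℕ → ℝ) (q E : ℝ) (hq : 0 < q)
    (h : Tendsto (fun n : ℕ => a n / (n : ℝ) ^ (q - 1)) atTop (nhds E)) :
    Tendsto (fun n : ℕ => (∑ i ∈ Finset.range n, a i) / (n : ℝ) ^ q) atTop (nhds (E / q)) := by
  set g : ℕ → ℝ := fun i => ((i : ℝ) + 1) ^ q - (i : ℝ) ^ q with hg
  have hgpos : ∀ i, 0 < g i := by
    intro i
    simp only [hg, sub_pos]
    exact Real.rpow_lt_rpow (by positivity) (by linarith) hq
  have hsum : ∀ n, ∑ i ∈ Finset.range n, g i = (n : ℝ) ^ q := by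
    intro n
    have := Finset.sum_range_sub (fun i : ℕ => (i : ℝ) ^ q) n
    simp only [Nat.cast_add, Nat.cast_one, Nat.cast_zero, Real.zero_rpow hq.ne', sub_zero] at this
    exact this
  have hlim := (h.div (g_asymp q) hq.ne').sub_const (E / q)
  rw [sub_self] at hlim
  have ho : (fun i => a i - E / q * g i) =o[atTop] g := by
    apply Asymptotics.isLittleO_of_tendsto
    · intro x hx; exact absurd hx (hgpos x).ne'
    · refine hlim.congr' ?_
      filter_upwards [eventually_gt_atTop 0] with n hn
      have hn0 : (0 : ℝ) < n := by positivity
      have hr : (n : ℝ) ^ (q - 1) ≠ 0 := by positivity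
      have := (hgpos n).ne'
      change a n / (n : ℝ) ^ (q - 1) / (g n / (n : ℝ) ^ (q - 1)) - E / q = _
      field_simp
  have hat : Tendsto (fun n => ∑ i ∈ Finset.range n, g i) atTop atTop := by
    simp only [hsum]
    exact (tendsto_rpow_atTop hq).comp tendsto_natCast_atTop_atTop
  have ho2 := (ho.sum_range (fun i => (hgpos i).le) hat).tendsto_div_nhds_zero
  have := ho2.add_const (E / q)
  rw [zero_add] at this
  refine this.congr' ?_
  filter_upwards [eventually_gt_atTop 0] with n hn
  have hn0 : (0 : ℝ) < n := by positivity
  have hr : (n : ℝ) ^ q ≠ 0 := by positivity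
  rw [Finset.sum_sub_distrib, ← Finset.mul_sum, hsum]
  field_simp
  ring


lemma dJ_succ (α β : ℝ) (hα : -1 < α) (n k : ℕ) (h : k ≤ n) :
    dJ α β n (k + 1) = dJ α β n k * (((n : ℝ) - k) * (n + α + β + 1 + k) / ((k + 1) * (α + k + 1))) := by
  have c1 : (0:ℝ) ≤ k := by positivity
  have p : 0 < α + k + 1 := by linarith
  have g : Real.Gamma (α + (k + 1 : ℕ) + 1) = (α + k + 1) * Real.Gamma (α + k + 1) := by
    push_cast
    rw [← add_assoc α, Real.Gamma_add_one p.ne']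
  have p2 : Real.Gamma (α + k + 1) ≠ 0 := (Real.Gamma_pos_of_pos p).ne'
  unfold dJ
  rw [g, Finset.prod_range_succ, Nat.descFactorial_succ, Nat.factorial_succ]
  push_cast [Nat.cast_sub h]
  have hf : (k.factorial : ℝ) ≠ 0 := by positivity
  have := p.ne'
  field_simp

lemma dJ_cross (α β : ℝ) (hα : -1 < α) (hβ : -1 < β) (i n j : ℕ) (hin : i ≤ n) (t : ℕ) :
    dJ α β i (j + t) * dJ α β n j ≤ dJ α β i j * dJ α β n (j + t) := by
  induction t with
  | zero => simp
  | succ t ih =>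
    rw [← add_assoc]
    set k := j + t
    by_cases hk : k < i
    · rw [dJ_succ α β hα i k (by omega), dJ_succ α β hα n k (by omega)]
      have c1 : (0:ℝ) ≤ k := by positivity
      have c2 : (k:ℝ) + 1 ≤ i := by exact_mod_cast hk
      have c3 : (i:ℝ) ≤ n := by exact_mod_cast hin
      have p : 0 < α + k + 1 := by linarith
      set r := ((i : ℝ) - k) * (i + α + β + 1 + k) / ((k + 1) * (α + k + 1))
      set r' := ((n : ℝ) - k) * (n + α + β + 1 + k) / ((k + 1) * (α + k + 1))
      have hr : 0 ≤ r := by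
        apply div_nonneg (mul_nonneg _ _) (by positivity) <;> linarith
      have hrr : r ≤ r' := by
        apply div_le_div_of_nonneg_right _ (by positivity)
        apply mul_le_mul <;> linarith
      have d1 := dJ_nonneg α β hα hβ i j
      have d2 := dJ_nonneg α β hα hβ n k
      calc _ = (dJ α β i k * dJ α β n j) * r := by ring
        _ ≤ (dJ α β i j * dJ α β n k) * r := mul_le_mul_of_nonneg_right ih hr
        _ ≤ (dJ α β i j * dJ α β n k) * r' := mul_le_mul_of_nonneg_left hrr (by positivity)
        _ = _ := by ring
    · rw [dJ_zero α β i (k + 1) (by omega), zero_mul]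
      exact mul_nonneg (dJ_nonneg α β hα hβ _ _) (dJ_nonneg α β hα hβ _ _)

noncomputable def wJ (α β : ℝ) (j i : ℕ) : ℝ := (j.factorial / 2 ^ j) * dJ α β i j / jacobiNormSq α β i

noncomputable def sJ (α β : ℝ) (j n k : ℕ) : ℝ := ∑ i ∈ Finset.range n, wJ α β j i * dJ α β i k

lemma wJ_nonneg (α β : ℝ) (hα : -1 < α) (hβ : -1 < β) (j i : ℕ) : 0 ≤ wJ α β j i := by
  have := dJ_nonneg α β hα hβ i j
  have := norm_pos' α β hα hβ i
  unfold wJ; positivity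

lemma sJ_nonneg (α β : ℝ) (hα : -1 < α) (hβ : -1 < β) (j n k : ℕ) : 0 ≤ sJ α β j n k :=
  Finset.sum_nonneg fun i _ => mul_nonneg (wJ_nonneg α β hα hβ j i) (dJ_nonneg α β hα hβ i k)

lemma sJ_cross (α β : ℝ) (hα : -1 < α) (hβ : -1 < β) (j n k t : ℕ) :
    sJ α β j n (k + t) * dJ α β n k ≤ sJ α β j n k * dJ α β n (k + t) := by
  unfold sJ
  rw [Finset.sum_mul, Finset.sum_mul]
  apply Finset.sum_le_sum
  intro i hi
  have hi := Finset.mem_range.1 hi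
  rw [mul_assoc, mul_assoc]
  exact mul_le_mul_of_nonneg_left (dJ_cross α β hα hβ i n k hi.le t) (wJ_nonneg α β hα hβ j i)

lemma kernK_eq (α β : ℝ) (hα : -1 < α) (hβ : -1 < β) (j n : ℕ) (hn : 1 ≤ n) :
    kernK α β j j (n - 1) 1 1 = (j.factorial / 2 ^ j) * sJ α β j n j := by
  unfold kernK sJ
  rw [Nat.sub_add_cancel hn, Finset.mul_sum]
  apply Finset.sum_congr rfl
  intro i _
  rw [jacobiP_deriv α β hα hβ, wJ]; ring

lemma kernKPoly_eq (α β : ℝ) (hα : -1 < α) (hβ : -1 < β) (j n : ℕ) (hn : 1 ≤ n) (x : ℝ) :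
    (kernKPoly α β j (n - 1)).eval x = ∑ k ∈ Finset.range (n + 1), sJ α β j n k * ((x - 1) / 2) ^ k := by
  unfold kernKPoly sJ
  simp only [Finset.sum_mul]
  rw [Nat.sub_add_cancel hn, eval_finsetSum, Finset.sum_comm]
  apply Finset.sum_congr rfl
  intro i hi
  have hi := Finset.mem_range.1 hi
  rw [eval_mul, eval_C, jacobiP_deriv α β hα hβ, jacobiP_eval' α β hα hβ i n hi.le, Finset.mul_sum]
  apply Finset.sum_congr rfl
  intro k _
  rw [wJ]; ring

noncomputable def AJ (α β : ℝ) (j : ℕ) (Ms : ℕ → ℝ) (n : ℕ) : ℝ :=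
  Ms n * ((j.factorial / 2 ^ j) * sJ α β j n j)

noncomputable def cJ (α β : ℝ) (j : ℕ) (Ms : ℕ → ℝ) (n : ℕ) : ℝ :=
  Ms n * ((j.factorial / 2 ^ j) * dJ α β n j) / (1 + AJ α β j Ms n)

lemma sobQ_eval (α β : ℝ) (hα : -1 < α) (hβ : -1 < β) (j : ℕ) (Ms : ℕ → ℝ) (n : ℕ) (hn : 1 ≤ n) (x : ℝ) :
    (sobQ α β j Ms n).eval x = ∑ k ∈ Finset.range (n + 1),
      (dJ α β n k - cJ α β j Ms n * sJ α β j n k) * ((x - 1) / 2) ^ k := by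
  unfold sobQ
  rw [eval_sub, eval_mul, eval_C, kernKPoly_eq α β hα hβ j n hn, jacobiP_eval α β hα hβ, Finset.mul_sum,
    ← Finset.sum_sub_distrib, kernK_eq α β hα hβ j n hn, jacobiP_deriv α β hα hβ]
  apply Finset.sum_congr rfl
  intro k _
  rw [cJ, AJ]; ring

lemma wd_asymp (α β : ℝ) (hα : -1 < α) (hβ : -1 < β) (j k : ℕ) :
    Tendsto (fun n : ℕ => wJ α β j n * dJ α β n k / (n : ℝ) ^ ((2 * α + 2 * j + 2 * k + 2) - 1)) atTop
      (nhds ((j.factorial / 2 ^ j) * (1 / (j.factorial * Real.Gamma (α + j + 1))) / 2 ^ (α + β) *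
        (1 / (k.factorial * Real.Gamma (α + k + 1))))) := by
  have h := ((((dJ_asymp α β hα j).const_mul ((j.factorial : ℝ) / 2 ^ j)).div (norm_asymp α β hα hβ)
    (by positivity)).mul (dJ_asymp α β hα k))
  refine h.congr' ?_
  filter_upwards [eventually_gt_atTop 0] with n hn
  have hn0 : (0 : ℝ) < n := by positivity
  have hN := (norm_pos' α β hα hβ n).ne'
  have e : (n : ℝ) ^ ((2 * α + 2 * j + 2 * k + 2) - 1) = (n : ℝ) ^ (α + 2 * j) * (n : ℝ) ^ (α + 2 * k) * n := by
    rw [← Real.rpow_add hn0, ← Real.rpow_add_one hn0.ne']; congr 1; ring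
  rw [e]
  have r1 : (n : ℝ) ^ (α + 2 * j) ≠ 0 := by positivity
  have r2 : (n : ℝ) ^ (α + 2 * k) ≠ 0 := by positivity
  simp only [Pi.div_apply, wJ]
  field_simp

lemma sJ_asymp (α β : ℝ) (hα : -1 < α) (hβ : -1 < β) (j k : ℕ) :
    Tendsto (fun n : ℕ => sJ α β j n k / (n : ℝ) ^ (2 * α + 2 * j + 2 * k + 2)) atTop
      (nhds ((j.factorial / 2 ^ j) * (1 / (j.factorial * Real.Gamma (α + j + 1))) / 2 ^ (α + β) *
        (1 / (k.factorial * Real.Gamma (α + k + 1))) / (2 * α + 2 * j + 2 * k + 2))) := by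
  apply sum_asymp _ _ _ _ (wd_asymp α β hα hβ j k)
  have c1 : (0:ℝ) ≤ k := by positivity
  have c2 : (0:ℝ) ≤ j := by positivity
  linarith

noncomputable def XJ (α β : ℝ) (j : ℕ) (M : ℝ) : ℝ := M / (2 ^ (α + β) * 2 ^ j * 2 ^ j * Real.Gamma (α + j + 1) ^ 2)

lemma AJ_lim (α β : ℝ) (hα : -1 < α) (hβ : -1 < β) (j : ℕ) (M : ℝ) (Ms : ℕ → ℝ)
    (hlim : Tendsto (fun n : ℕ => Ms n * (n : ℝ) ^ (2 * (α + 2 * j + 1))) atTop (nhds M)) :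
    Tendsto (AJ α β j Ms) atTop (nhds (XJ α β j M / (2 * α + 4 * j + 2))) := by
  have h := (hlim.mul (sJ_asymp α β hα hβ j j)).const_mul ((j.factorial : ℝ) / 2 ^ j)
  have p : Real.Gamma (α + j + 1) ≠ 0 := (Real.Gamma_pos_of_pos (by
    have c2 : (0:ℝ) ≤ j := by positivity
    linarith)).ne'
  have hf : (j.factorial : ℝ) ≠ 0 := by positivity
  convert h.congr' ?_ using 2
  · unfold XJ
    rw [show 2 * α + 2 * (j : ℝ) + 2 * j + 2 = 2 * α + 4 * j + 2 by ring]
    field_simp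
  · filter_upwards [eventually_gt_atTop 0] with n hn
    have hn0 : (0 : ℝ) < n := by positivity
    rw [show 2 * α + 2 * (j : ℝ) + 2 * j + 2 = 2 * (α + 2 * j + 1) by ring]
    have r1 : (n : ℝ) ^ (2 * (α + 2 * (j : ℝ) + 1)) ≠ 0 := by positivity
    unfold AJ
    field_simp

lemma LJ_lim (α β : ℝ) (hα : -1 < α) (hβ : -1 < β) (j : ℕ) (M : ℝ) (hM : 0 < M) (Ms : ℕ → ℝ)
    (hlim : Tendsto (fun n : ℕ => Ms n * (n : ℝ) ^ (2 * (α + 2 * j + 1))) atTop (nhds M)) (hj : 1 ≤ j) :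
    Tendsto (fun n => cJ α β j Ms n * sJ α β j n 0 / dJ α β n 0) atTop
      (nhds (XJ α β j M / (2 * α + 2 * j + 2) / (1 + XJ α β j M / (2 * α + 4 * j + 2)))) := by
  have c2 : (1:ℝ) ≤ j := by exact_mod_cast hj
  have p : 0 < Real.Gamma (α + j + 1) := Real.Gamma_pos_of_pos (by linarith)
  have p0 : 0 < Real.Gamma (α + (0:ℕ) + 1) := Real.Gamma_pos_of_pos (by push_cast; linarith)
  have hX : 0 < XJ α β j M := by unfold XJ; positivity
  have q1 : 0 < 2 * α + 4 * (j : ℝ) + 2 := by linarith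
  have q2 : 0 < 2 * α + 2 * (j : ℝ) + 2 := by linarith
  have hA := (AJ_lim α β hα hβ j M Ms hlim).const_add 1
  have h := ((((hlim.mul (dJ_asymp α β hα j)).const_mul ((j.factorial : ℝ) / 2 ^ j)).mul
    (sJ_asymp α β hα hβ j 0)).div (dJ_asymp α β hα 0) (by positivity)).div hA (by positivity)
  have hf : (j.factorial : ℝ) ≠ 0 := by positivity
  convert h.congr' ?_ using 2
  · congr 1
    unfold XJ
    push_cast at p0 ⊢
    rw [show 2 * α + 2 * (j : ℝ) + 2 * 0 + 2 = 2 * α + 2 * j + 2 by ring]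
    field_simp
  · filter_upwards [eventually_gt_atTop 0] with n hn
    have hn0 : (0 : ℝ) < n := by positivity
    have e : (n : ℝ) ^ (2 * (α + 2 * j + 1)) * (n : ℝ) ^ (α + 2 * (0:ℕ)) = 
      (n : ℝ) ^ (α + 2 * j) * (n : ℝ) ^ (2 * α + 2 * j + 2 * (0:ℕ) + 2) := by
      rw [← Real.rpow_add hn0, ← Real.rpow_add hn0]; congr 1; push_cast; ring
    have r1 : (n : ℝ) ^ (2 * (α + 2 * (j : ℝ) + 1)) ≠ 0 := by positivity
    have r2 : (n : ℝ) ^ (α + 2 * ((0:ℕ) : ℝ)) ≠ 0 := by positivity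
    have r3 : (n : ℝ) ^ (α + 2 * (j : ℝ)) ≠ 0 := by positivity
    have r4 : (n : ℝ) ^ (2 * α + 2 * j + 2 * ((0:ℕ) : ℝ) + 2) ≠ 0 := by positivity
    simp only [Pi.div_apply, cJ]
    generalize (n : ℝ) ^ (2 * (α + 2 * (j : ℝ) + 1)) = R1 at *
    generalize (n : ℝ) ^ (α + 2 * ((0:ℕ) : ℝ)) = R2 at *
    generalize (n : ℝ) ^ (α + 2 * (j : ℝ)) = R3 at *
    generalize (n : ℝ) ^ (2 * α + 2 * j + 2 * ((0:ℕ) : ℝ) + 2) = R4 at *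
    have hR1 : R1 = R3 * R4 / R2 := by field_simp; exact e
    rw [hR1]
    field_simp

lemma d_ratio_lim (α β : ℝ) (hα : -1 < α) (k j : ℕ) (h : k < j) :
    Tendsto (fun n => dJ α β n k / dJ α β n j) atTop (nhds 0) := by
  have c2 : (k:ℝ) + 1 ≤ j := by exact_mod_cast h
  have c1 : (0:ℝ) ≤ k := by positivity
  have p : 0 < Real.Gamma (α + j + 1) := Real.Gamma_pos_of_pos (by linarith)
  have h0 : Tendsto (fun n : ℕ => (n : ℝ) ^ (-(2 * ((j : ℝ) - k)))) atTop (nhds 0) :=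
    (tendsto_rpow_neg_atTop (by linarith)).comp tendsto_natCast_atTop_atTop
  have h1 := ((dJ_asymp α β hα k).div (dJ_asymp α β hα j) (by positivity)).mul h0
  rw [mul_zero] at h1
  refine h1.congr' ?_
  filter_upwards [eventually_gt_atTop 0] with n hn
  have hn0 : (0 : ℝ) < n := by positivity
  have e : (n : ℝ) ^ (α + 2 * (j : ℝ)) * (n : ℝ) ^ (-(2 * ((j : ℝ) - k))) = (n : ℝ) ^ (α + 2 * (k : ℝ)) := by
    rw [← Real.rpow_add hn0]; congr 1; ring
  have r1 : (n : ℝ) ^ (α + 2 * (j : ℝ)) ≠ 0 := by positivity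
  have r2 : (n : ℝ) ^ (-(2 * ((j : ℝ) - k))) ≠ 0 := by positivity
  simp only [Pi.div_apply]
  rw [← e]
  field_simp

lemma sobQ_pos (α β : ℝ) (hα : -1 < α) (hβ : -1 < β) (j : ℕ) (Ms : ℕ → ℝ) (hMs : ∀ n, 0 ≤ Ms n)
    (n : ℕ) (hn : 1 ≤ n) (hjn : j ≤ n) (δ : ℝ) (hδ : 0 < δ)
    (hR : 0 < 1 / (1 + AJ α β j Ms n) - (cJ α β j Ms n * sJ α β j n 0 / dJ α β n 0) *
      ∑ k ∈ Finset.range j, dJ α β n k / dJ α β n j * (δ ^ k / δ ^ j))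
    (x : ℝ) (hx : 1 + 2 * δ ≤ x) : 0 < (sobQ α β j Ms n).eval x := by
  rw [sobQ_eval α β hα hβ j Ms n hn]
  set s := (x - 1) / 2 with hs
  have hsδ : δ ≤ s := by rw [hs]; linarith
  have hs0 : 0 < s := by linarith
  have hm := hMs n
  have hAn : 0 ≤ AJ α β j Ms n := by
    have := sJ_nonneg α β hα hβ j n j
    unfold AJ; positivity
  have hA1 : 0 < 1 + AJ α β j Ms n := by linarith
  have hdj := dJ_pos α β hα hβ n j hjn
  have hd0 := dJ_pos α β hα hβ n 0 (by omega)
  have hc : 0 ≤ cJ α β j Ms n := by unfold cJ; positivity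
  set c := cJ α β j Ms n with hcdef
  set L := c * sJ α β j n 0 / dJ α β n 0 with hL
  have hs0' := sJ_nonneg α β hα hβ j n 0
  have hLn : 0 ≤ L := by positivity
  have hcs : c * sJ α β j n j = dJ α β n j * (AJ α β j Ms n / (1 + AJ α β j Ms n)) := by
    rw [hcdef, cJ]
    field_simp
    rw [AJ]; field_simp
  have hqj : dJ α β n j - c * sJ α β j n j = dJ α β n j * (1 / (1 + AJ α β j Ms n)) := by
    rw [hcs]; field_simp; ring
  have hlow : ∀ k ∈ Finset.range j, - (L * (dJ α β n k / dJ α β n j * (δ ^ k / δ ^ j))) * (dJ α β n j * s ^ j) ≤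
      (dJ α β n k - c * sJ α β j n k) * s ^ k := by
    intro k hk
    have hk := Finset.mem_range.1 hk
    have hcr := sJ_cross α β hα hβ j n 0 k
    rw [zero_add] at hcr
    have hdk := dJ_nonneg α β hα hβ n k
    have h1 : c * sJ α β j n k ≤ L * dJ α β n k := by
      rw [hL, div_mul_eq_mul_div, le_div_iff₀ hd0]
      calc _ = c * (sJ α β j n k * dJ α β n 0) := by ring
        _ ≤ c * (sJ α β j n 0 * dJ α β n k) := mul_le_mul_of_nonneg_left hcr hc
        _ = _ := by ring
    have h2 : s ^ k ≤ δ ^ k / δ ^ j * s ^ j := by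
      have e1 : δ ^ j = δ ^ k * δ ^ (j - k) := by rw [← pow_add]; congr 1; omega
      have e2 : s ^ j = s ^ k * s ^ (j - k) := by rw [← pow_add]; congr 1; omega
      have e3 : δ ^ (j - k) ≤ s ^ (j - k) := pow_le_pow_left₀ hδ.le hsδ _
      rw [e1, e2]
      have : δ ^ k / (δ ^ k * δ ^ (j - k)) * (s ^ k * s ^ (j - k)) = s ^ k * (s ^ (j - k) / δ ^ (j - k)) := by
        field_simp
      rw [this]
      apply le_mul_of_one_le_right (by positivity)
      rw [one_le_div (by positivity)]; exact e3
    calc _ = -(L * dJ α β n k) * (δ ^ k / δ ^ j * s ^ j) := by field_simp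
      _ ≤ -(L * dJ α β n k) * s ^ k := by
        have : 0 ≤ L * dJ α β n k := by positivity
        nlinarith
      _ ≤ _ := by
        apply mul_le_mul_of_nonneg_right _ (by positivity)
        linarith
  have hhigh : ∀ k ∈ Finset.Ico (j + 1) (n + 1), 0 ≤ (dJ α β n k - c * sJ α β j n k) * s ^ k := by
    intro k hk
    have hk := Finset.mem_Ico.1 hk
    apply mul_nonneg _ (by positivity)
    obtain ⟨t, rfl⟩ : ∃ t, k = j + t := ⟨k - j, by omega⟩
    have hcr := sJ_cross α β hα hβ j n j t
    have hdk := dJ_nonneg α β hα hβ n (j + t)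
    have h3 : c * sJ α β j n j ≤ dJ α β n j := by
      have : 0 ≤ dJ α β n j * (1 / (1 + AJ α β j Ms n)) := by positivity
      linarith
    have : c * sJ α β j n (j + t) * dJ α β n j ≤ dJ α β n (j + t) * dJ α β n j := by
      calc _ = c * (sJ α β j n (j + t) * dJ α β n j) := by ring
        _ ≤ c * (sJ α β j n j * dJ α β n (j + t)) := mul_le_mul_of_nonneg_left hcr hc
        _ = (c * sJ α β j n j) * dJ α β n (j + t) := by ring
        _ ≤ dJ α β n j * dJ α β n (j + t) := mul_le_mul_of_nonneg_right h3 hdk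
        _ = _ := by ring
    linarith [le_of_mul_le_mul_right this hdj]
  rw [← Finset.sum_range_add_sum_Ico _ (show j + 1 ≤ n + 1 by omega), Finset.sum_range_succ, hqj]
  have t1 := Finset.sum_le_sum hlow
  have t2 := Finset.sum_nonneg hhigh
  rw [← Finset.sum_mul, Finset.sum_neg_distrib, ← Finset.mul_sum] at t1
  have t3 : 0 < dJ α β n j * s ^ j := by positivity
  have t4 := mul_pos hR t3
  nlinarith [t1, t2, t4]

/-- for `γ = 2(α+2j+1)` and `M` above the critical value, the largest real
zero of `Q_n` tends to 1. -/
theorem sobQ_largest_zero_tendsto_one_critical (α β : ℝ) (hα : -1 < α) (hβ : -1 < β)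
    (j : ℕ) (hj : 1 ≤ j) (γ M : ℝ) (hM : 0 < M) (Ms : ℕ → ℝ) (hMs : ∀ n, 0 ≤ Ms n)
    (hγ : γ = 2 * (α + 2 * j + 1))
    (hlim : Filter.Tendsto (fun n : ℕ => Ms n * (n : ℝ) ^ γ) Filter.atTop (nhds M))
    (hMbig : (2 : ℝ) ^ (α + β + 2 * (j : ℝ) + 1) * (α + j + 1) * (α + 2 * j + 1) *
        Real.Gamma (α + j + 1) ^ 2 / j < M)
    (y : ℕ → ℝ)
    (hy : ∀ n, 1 ≤ n → IsGreatest {x : ℝ | (sobQ α β j Ms n).eval x = 0} (y n)) :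
    Filter.Tendsto y Filter.atTop (nhds 1) := by
  subst hγ
  have c2 : (1:ℝ) ≤ j := by exact_mod_cast hj
  have p : 0 < Real.Gamma (α + j + 1) := Real.Gamma_pos_of_pos (by linarith)
  have q1 : 0 < 2 * α + 4 * (j : ℝ) + 2 := by linarith
  have q2 : 0 < 2 * α + 2 * (j : ℝ) + 2 := by linarith
  have hX : 0 < XJ α β j M := by unfold XJ; positivity
  have hA := AJ_lim α β hα hβ j M Ms hlim
  have hL := LJ_lim α β hα hβ j M hM Ms hlim hj
  have hL1 : 1 < XJ α β j M / (2 * α + 2 * j + 2) / (1 + XJ α β j M / (2 * α + 4 * j + 2)) := by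
    have hXb : 2 * (α + j + 1) * (α + 2 * j + 1) / j < XJ α β j M := by
      unfold XJ
      rw [lt_div_iff₀ (by positivity)]
      refine lt_of_eq_of_lt ?_ hMbig
      rw [show α + β + 2 * (j : ℝ) + 1 = α + β + j + j + 1 by ring, Real.rpow_add_one (by norm_num),
        Real.rpow_add_natCast (by norm_num), Real.rpow_add_natCast (by norm_num)]
      ring
    rw [div_lt_iff₀ (by linarith)] at hXb
    rw [lt_div_iff₀ (by positivity), one_mul, lt_div_iff₀ q2]
    have : (1 + XJ α β j M / (2 * α + 4 * j + 2)) * (2 * α + 2 * j + 2) =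
      ((2 * α + 4 * j + 2 + XJ α β j M) * (2 * α + 2 * j + 2)) / (2 * α + 4 * j + 2) := by field_simp
    rw [this, div_lt_iff₀ q1]
    nlinarith
  have hneg : ∀ᶠ n in atTop, (sobQ α β j Ms n).eval 1 < 0 := by
    filter_upwards [hL.eventually (lt_mem_nhds hL1), eventually_ge_atTop 1] with n h1 hn
    rw [sobQ_eval α β hα hβ j Ms n hn, Finset.sum_range_succ', Finset.sum_eq_zero]
    · have hd0 := dJ_pos α β hα hβ n 0 (by omega)
      rw [lt_div_iff₀ hd0] at h1
      simp only [pow_zero, mul_one, zero_add]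
      linarith
    · intro k _; simp
  have hpos : ∀ δ : ℝ, 0 < δ → ∀ᶠ n in atTop, ∀ x, 1 + 2 * δ ≤ x → 0 < (sobQ α β j Ms n).eval x := by
    intro δ hδ
    have hR : Tendsto (fun n => ∑ k ∈ Finset.range j, dJ α β n k / dJ α β n j * (δ ^ k / δ ^ j)) atTop
        (nhds (∑ k ∈ Finset.range j, 0 * (δ ^ k / δ ^ j))) :=
      tendsto_finsetSum _ (fun k hk => (d_ratio_lim α β hα k j (Finset.mem_range.1 hk)).mul_const _)
    simp only [zero_mul, Finset.sum_const_zero] at hR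
    have hT := ((tendsto_const_nhds (x := (1:ℝ))).div (hA.const_add 1) (by positivity)).sub (hL.mul hR)
    have hpos : 0 < 1 / (1 + XJ α β j M / (2 * α + 4 * j + 2)) -
      XJ α β j M / (2 * α + 2 * j + 2) / (1 + XJ α β j M / (2 * α + 4 * j + 2)) * 0 := by
      rw [mul_zero, sub_zero]; positivity
    filter_upwards [hT.eventually (lt_mem_nhds hpos), eventually_ge_atTop 1, eventually_ge_atTop j] with n h1 hn hjn
    exact sobQ_pos α β hα hβ j Ms hMs n hn hjn δ hδ h1
  rw [Metric.tendsto_nhds]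
  intro ε hε
  filter_upwards [hneg, hpos (ε / 4) (by positivity), eventually_ge_atTop 1] with n h1 h2 hn
  obtain ⟨hz, hub⟩ := hy n hn
  have hlt : y n < 1 + 2 * (ε / 4) := by
    by_contra hcon
    exact (h2 (y n) (not_lt.1 hcon)).ne' hz
  have hge : 1 ≤ y n := by
    have hivt := intermediate_value_Icc (show (1:ℝ) ≤ 1 + 2 * (ε / 4) by linarith)
      ((sobQ α β j Ms n).continuous.continuousOn)
    obtain ⟨z, hz1, hz2⟩ := hivt ⟨h1.le, (h2 _ le_rfl).le⟩
    exact hz1.1.trans (hub hz2)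
  rw [Real.dist_eq, abs_lt]
  constructor <;> linarith
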